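/- Let W = ℂ^{2n} with n ≥ 2, equipped with a nondegenerate symmetric bilinear form b, set V = W ⊕ W*, and let g = {A ⊕ (−A*) : A ∈ so(W,b)} ⊂ gl(V), where so(W,b) = {A ∈ gl(W) | b(Ax,y) + b(x,Ay) = 0} and A* is the dual map on W* (this is so(2n,ℂ) acting diagonally on W ⊕ W*, and g lies in sp(V,ω) for the canonical symplectic form ω((x,φ),(y,ψ)) = φ(y) − ψ(x)). Then the space R̄(g) is linearly isomorphic to the space Λ⁴W of alternating 4-linear forms on W*; in particular dim_ℂ R̄(g) equals the binomial coefficient C(2n,4), and g is a skew-Berger subalgebra of sp(V,ω). -/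

import Mathlib

/-!
Write `e : W ≃ W*` for the isomorphism given by `b`. For `R ∈ R̄(g)` the Bianchi identity on
`W × W × W*` and on `W* × W* × W` splits into its `W`- and `W*`-components: it forces
`R(w, w') = 0` and `R(φ, ψ) = 0` (`curv_inl_inl`, `curv_inr_inr`), and for the mixed values
`A(w, φ) = R(w, φ)|_W ∈ so(W, b)` it says that `A(w, φ) x` is skew in `(w, x)` and `ψ (A(w, φ) x)`
is skew in `(φ, ψ)` (`curv_swap_inl`, `curv_swap_inr`). Together with `A(w, φ) ∈ so(W, b)` this means
that the 4-linear form `T(e w, φ, e x, ψ) = ψ (A(w, φ) x)` on `W*` is skew under three transpositions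
generating the symmetric group `S₄`, so it is alternating. Conversely every alternating `T` defines
such an `A`, hence a curvature tensor (`altToCurv_mem`); this is the isomorphism `R̄(g) ≃ Λ⁴W`
(`curvEquiv`).

For the skew-Berger property, `so(W, b)` is spanned by the bivectors `u_k ∧ u_l` of a basis `(u_i)`
(`two_smul_eq_sum_bivec`). As `dim W ≥ 4`, there are two further indices `i, j`, and contracting
`T = u_i ∧ u_j ∧ u_k ∧ u_l` with the dual basis vectors `u_i*`, `u_j*` gives `u_k ∧ u_l`
(`altEnd_detForm`), so each such bivector is a value of a curvature tensor (`soDiag_le_span`).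
-/

open Module

variable {W : Type*} [AddCommGroup W] [Module ℂ W]

-- instance ladder to keep typeclass search on the deeply nested types tractable
noncomputable local instance i1a : AddCommGroup (Module.End ℂ (W × Dual ℂ W)) := inferInstance
noncomputable local instance i1b : Module ℂ (Module.End ℂ (W × Dual ℂ W)) := inferInstance
noncomputable local instance i1c : SMulCommClass ℂ ℂ (Module.End ℂ (W × Dual ℂ W)) := inferInstance
noncomputable local instance i2a : AddCommGroup ((W × Dual ℂ W) →ₗ[ℂ] Module.End ℂ (W × Dual ℂ W)) := inferInstance
noncomputable local instance i2b : Module ℂ ((W × Dual ℂ W) →ₗ[ℂ] Module.End ℂ (W × Dual ℂ W)) := inferInstance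
noncomputable local instance i2c : SMulCommClass ℂ ℂ ((W × Dual ℂ W) →ₗ[ℂ] Module.End ℂ (W × Dual ℂ W)) := inferInstance
noncomputable local instance i3a : AddCommGroup ((W × Dual ℂ W) →ₗ[ℂ] (W × Dual ℂ W) →ₗ[ℂ] Module.End ℂ (W × Dual ℂ W)) := inferInstance
noncomputable local instance i3b : Module ℂ ((W × Dual ℂ W) →ₗ[ℂ] (W × Dual ℂ W) →ₗ[ℂ] Module.End ℂ (W × Dual ℂ W)) := inferInstance

/-- `gl(W)` embedded diagonally in `gl(W ⊕ W*)` by `A ↦ A ⊕ (−A*)`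
(`A*` is the dual map). -/
noncomputable def glDiagEmb :
    Module.End ℂ W →ₗ[ℂ] Module.End ℂ (W × Module.Dual ℂ W) where
  toFun A := A.prodMap (-(Module.Dual.transpose A))
  map_add' A B := by
    apply LinearMap.ext; rintro ⟨x, φ⟩
    simp [Prod.ext_iff]
    abel
  map_smul' c A := by
    apply LinearMap.ext; rintro ⟨x, φ⟩
    simp [Prod.ext_iff]

variable (b : W →ₗ[ℂ] W →ₗ[ℂ] ℂ)

/-- `so(W,b) = {A | b(Ax,y) + b(x,Ay) = 0}`. -/
noncomputable def soSub : Submodule ℂ (Module.End ℂ W) where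
  carrier := {A | ∀ x y : W, b (A x) y + b x (A y) = 0}
  add_mem' := by
    intro A B hA hB
    intro x y
    have h1 := hA x y
    have h2 := hB x y
    simp only [LinearMap.add_apply, map_add, LinearMap.add_apply] at *
    linear_combination h1 + h2
  zero_mem' := by intro x y; simp
  smul_mem' := by
    intro c A hA x y
    have h := hA x y
    simp only [LinearMap.smul_apply, map_smul, LinearMap.smul_apply,
      smul_eq_mul] at *
    linear_combination c * h

/-- `g = so(W,b)` acting diagonally on `W ⊕ W*`: the set
`{A ⊕ (−A*) : A ∈ so(W,b)}`. -/
noncomputable def soDiag : Submodule ℂ (Module.End ℂ (W × Module.Dual ℂ W)) :=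
  Submodule.map (glDiagEmb (W := W)) (soSub b)

/-- The space `R̄(g)` of symmetric curvature tensors of type
`g = so(W,b) ⊂ gl(W ⊕ W*)`. -/
noncomputable def soDiagCurv :
    Submodule ℂ ((W × Module.Dual ℂ W) →ₗ[ℂ] (W × Module.Dual ℂ W) →ₗ[ℂ]
      Module.End ℂ (W × Module.Dual ℂ W)) where
  carrier := {R | (∀ x y, R x y = R y x) ∧ (∀ x y, R x y ∈ soDiag b) ∧
    (∀ x y z, R x y z + R y z x + R z x y = 0)}
  add_mem' := by
    rintro R S ⟨hs1, hm1, hb1⟩ ⟨hs2, hm2, hb2⟩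
    refine ⟨fun x y => by simp [hs1 x y, hs2 x y],
      fun x y => add_mem (hm1 x y) (hm2 x y), fun x y z => ?_⟩
    simp only [LinearMap.add_apply]
    rw [show ∀ a b c d e f : W × Module.Dual ℂ W,
      a + b + (c + d) + (e + f) = (a + c + e) + (b + d + f) from by intros; abel,
      hb1 x y z, hb2 x y z, add_zero]
  zero_mem' := ⟨fun x y => rfl, fun x y => zero_mem _, fun x y z => by simp⟩
  smul_mem' := by
    rintro c R ⟨hs, hm, hb⟩
    refine ⟨fun x y => by simp [hs x y],
      fun x y => Submodule.smul_mem _ _ (hm x y), fun x y z => ?_⟩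
    simp only [LinearMap.smul_apply]
    rw [← smul_add, ← smul_add, hb x y z, smul_zero]

section SkewBerger

/-! ### Alternating 4-forms as 4-linear forms -/

section Forms

variable {D : Type*} [AddCommGroup D] [Module ℂ D]

/-- A 4-linear form that is skew under the transpositions `(0 2)`, `(1 3)`, `(2 3)` of its
arguments, packaged as an alternating map. -/
noncomputable def altOfSkew (F : D →ₗ[ℂ] D →ₗ[ℂ] D →ₗ[ℂ] D →ₗ[ℂ] ℂ)
    (h02 : ∀ x y z t, F x y z t = -F z y x t) (h13 : ∀ x y z t, F x y z t = -F x t z y)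
    (h23 : ∀ x y z t, F x y z t = -F x y t z) : D [⋀^Fin 4]→ₗ[ℂ] ℂ where
  toFun v := F (v 0) (v 1) (v 2) (v 3)
  map_update_add' := by
    intro inst v i x y
    obtain rfl : inst = instDecidableEqFin 4 := Subsingleton.elim _ _
    fin_cases i <;> simp [Function.update]
  map_update_smul' := by
    intro inst v i c x
    obtain rfl : inst = instDecidableEqFin 4 := Subsingleton.elim _ _
    fin_cases i <;> simp [Function.update]
  map_eq_zero_of_eq' v i j hij hne := by
    -- the three given transpositions generate the symmetric group on the four slots
    have h03 : ∀ x y z t, F x y z t = -F t y z x := fun x y z t => by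
      rw [h02 x y z t, h23 z y x t, h02 z y t x, neg_neg]
    have h01 : ∀ x y z t, F x y z t = -F y x z t := fun x y z t => by
      rw [h13 x y z t, h03 x t z y, h13 y t z x, neg_neg]
    have h12 : ∀ x y z t, F x y z t = -F x z y t := fun x y z t => by
      rw [h13 x y z t, h23 x t z y, h13 x t y z, neg_neg]
    have key : ∀ a : ℂ, a = -a → a = 0 := fun a h => by linear_combination h / 2
    apply key
    fin_cases i <;> fin_cases j <;> first
      | exact absurd rfl hne
      | (simp only [Fin.zero_eta, Fin.mk_one, Fin.reduceFinMk] at hij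
         first
          | (conv_lhs => rw [h01])
            rw [hij]; done
          | (conv_lhs => rw [h02])
            rw [hij]; done
          | (conv_lhs => rw [h03])
            rw [hij]; done
          | (conv_lhs => rw [h12])
            rw [hij]; done
          | (conv_lhs => rw [h13])
            rw [hij]; done
          | (conv_lhs => rw [h23])
            rw [hij])

/-- Alternating 1-forms as linear forms. -/
noncomputable def curryOne : (D [⋀^Fin 1]→ₗ[ℂ] ℂ) →ₗ[ℂ] D →ₗ[ℂ] ℂ where
  toFun S := (AlternatingMap.constLinearEquivOfIsEmpty (ι := Fin 0)).symm.toLinearMap ∘ₗ S.curryLeft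
  map_add' _ _ := rfl
  map_smul' _ _ := rfl

/-- Alternating 2-forms as bilinear forms. -/
noncomputable def curryTwo : (D [⋀^Fin 2]→ₗ[ℂ] ℂ) →ₗ[ℂ] D →ₗ[ℂ] D →ₗ[ℂ] ℂ where
  toFun S := curryOne ∘ₗ S.curryLeft
  map_add' _ _ := rfl
  map_smul' _ _ := rfl

/-- Alternating 3-forms as trilinear forms. -/
noncomputable def curryThree :
    (D [⋀^Fin 3]→ₗ[ℂ] ℂ) →ₗ[ℂ] D →ₗ[ℂ] D →ₗ[ℂ] D →ₗ[ℂ] ℂ where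
  toFun S := curryTwo ∘ₗ S.curryLeft
  map_add' _ _ := rfl
  map_smul' _ _ := rfl

/-- An alternating 4-form as a 4-linear form. -/
noncomputable def curryFour (T : D [⋀^Fin 4]→ₗ[ℂ] ℂ) :
    D →ₗ[ℂ] D →ₗ[ℂ] D →ₗ[ℂ] D →ₗ[ℂ] ℂ := curryThree ∘ₗ T.curryLeft

theorem curryFour_apply (T : D [⋀^Fin 4]→ₗ[ℂ] ℂ) (x y z t : D) :
    curryFour T x y z t = T ![x, y, z, t] := by
  change T _ = T _
  congr 1
  ext i
  fin_cases i <;> rfl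

theorem curryFour_swap02 (T : D [⋀^Fin 4]→ₗ[ℂ] ℂ) (x y z t : D) :
    curryFour T x y z t = -curryFour T z y x t := by
  rw [curryFour_apply, curryFour_apply, ← T.map_swap _ (show (0 : Fin 4) ≠ 2 by decide)]
  congr 1
  ext i
  fin_cases i <;> rfl

theorem curryFour_swap13 (T : D [⋀^Fin 4]→ₗ[ℂ] ℂ) (x y z t : D) :
    curryFour T x y z t = -curryFour T x t z y := by
  rw [curryFour_apply, curryFour_apply, ← T.map_swap _ (show (1 : Fin 4) ≠ 3 by decide)]
  congr 1
  ext i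
  fin_cases i <;> rfl

theorem curryFour_swap23 (T : D [⋀^Fin 4]→ₗ[ℂ] ℂ) (x y z t : D) :
    curryFour T x y z t = -curryFour T x y t z := by
  rw [curryFour_apply, curryFour_apply, ← T.map_swap _ (show (2 : Fin 4) ≠ 3 by decide)]
  congr 1
  ext i
  fin_cases i <;> rfl

end Forms

/-! ### Elements of `g` -/

theorem glDiagEmb_apply (A : Module.End ℂ W) (p : W × Dual ℂ W) :
    glDiagEmb A p = (A p.1, -(p.2 ∘ₗ A)) := rfl

theorem soDiag_le_sp (B : Module.End ℂ (W × Dual ℂ W)) (hB : B ∈ soDiag b)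
    (p q : W × Dual ℂ W) :
    ((B p).2 q.1 - q.2 (B p).1) + (p.2 (B q).1 - (B q).2 p.1) = 0 := by
  obtain ⟨A, -, rfl⟩ := hB
  simp [glDiagEmb_apply]

variable {b}

/-- A member of `g` that kills `W*` is zero, since `A ↦ -A*` is injective. -/
theorem eq_zero_of_inr {B : Module.End ℂ (W × Dual ℂ W)} (hB : B ∈ soDiag b)
    (h : ∀ φ : Dual ℂ W, B (0, φ) = 0) : B = 0 := by
  obtain ⟨A, -, rfl⟩ := hB
  have hA : A = 0 := by
    ext x
    refine (Module.forall_dual_apply_eq_zero_iff ℂ _).1 fun φ => ?_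
    have := congrArg (fun p : W × Dual ℂ W => p.2 x) (h φ)
    simpa [glDiagEmb_apply] using this
  rw [hA, map_zero]

theorem eq_zero_of_inl {B : Module.End ℂ (W × Dual ℂ W)} (hB : B ∈ soDiag b)
    (h : ∀ x : W, B (x, 0) = 0) : B = 0 := by
  obtain ⟨A, -, rfl⟩ := hB
  have hA : A = 0 := by
    ext x
    have := congrArg Prod.fst (h x)
    simpa [glDiagEmb_apply] using this
  rw [hA, map_zero]

theorem fst_inr {B : Module.End ℂ (W × Dual ℂ W)} (hB : B ∈ soDiag b) (φ : Dual ℂ W) :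
    (B (0, φ)).1 = 0 := by
  obtain ⟨A, -, rfl⟩ := hB
  simp [glDiagEmb_apply]

theorem snd_inl {B : Module.End ℂ (W × Dual ℂ W)} (hB : B ∈ soDiag b) (x : W) :
    (B (x, 0)).2 = 0 := by
  obtain ⟨A, -, rfl⟩ := hB
  simp [glDiagEmb_apply]

theorem snd_inr_apply {B : Module.End ℂ (W × Dual ℂ W)} (hB : B ∈ soDiag b)
    (φ : Dual ℂ W) (x : W) : (B (0, φ)).2 x = -φ (B (x, 0)).1 := by
  obtain ⟨A, -, rfl⟩ := hB
  simp [glDiagEmb_apply]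

theorem so_skew {B : Module.End ℂ (W × Dual ℂ W)} (hB : B ∈ soDiag b) (x y : W) :
    b (B (x, 0)).1 y + b x (B (y, 0)).1 = 0 := by
  obtain ⟨A, hA, rfl⟩ := hB
  exact hA x y

/-! ### Components of the Bianchi identity -/

section Curv

variable {R : (W × Dual ℂ W) →ₗ[ℂ] (W × Dual ℂ W) →ₗ[ℂ] Module.End ℂ (W × Dual ℂ W)}

/-- The `W*`-component of the Bianchi identity on `W × W × W*`. -/
theorem curv_inl_inl (hR : R ∈ soDiagCurv b) (w w' : W) : R (w, 0) (w', 0) = 0 := by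
  obtain ⟨hs, hm, hB⟩ := hR
  refine eq_zero_of_inr (hm _ _) fun φ => Prod.ext (fst_inr (hm _ _) φ) ?_
  have := congrArg Prod.snd (hB (w, 0) (w', 0) (0, φ))
  simpa [snd_inl (hm _ _)] using this

/-- The `W`-component of the Bianchi identity on `W* × W* × W`. -/
theorem curv_inr_inr (hR : R ∈ soDiagCurv b) (φ ψ : Dual ℂ W) : R (0, φ) (0, ψ) = 0 := by
  obtain ⟨hs, hm, hB⟩ := hR
  refine eq_zero_of_inl (hm _ _) fun x => Prod.ext ?_ (snd_inl (hm _ _) x)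
  have := congrArg Prod.fst (hB (0, φ) (0, ψ) (x, 0))
  simpa [fst_inr (hm _ _)] using this

/-- The `W`-component of the Bianchi identity on `W × W* × W`. -/
theorem curv_swap_inl (hR : R ∈ soDiagCurv b) (w x : W) (φ : Dual ℂ W) :
    (R (w, 0) (0, φ) (x, 0)).1 = -(R (x, 0) (0, φ) (w, 0)).1 := by
  obtain ⟨hs, hm, hB⟩ := hR
  have := congrArg Prod.fst (hB (w, 0) (0, φ) (x, 0))
  rw [hs (0, φ) (x, 0)] at this
  simp only [Prod.fst_add, fst_inr (hm _ _), add_zero, Prod.fst_zero] at this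
  exact eq_neg_of_add_eq_zero_left this

/-- The `W*`-component of the Bianchi identity on `W × W* × W*`. -/
theorem curv_swap_inr (hR : R ∈ soDiagCurv b) (w x : W) (φ ψ : Dual ℂ W) :
    ψ (R (w, 0) (0, φ) (x, 0)).1 = -φ (R (w, 0) (0, ψ) (x, 0)).1 := by
  obtain ⟨hs, hm, hB⟩ := hR
  have := congrArg (fun p : W × Dual ℂ W => p.2 x) (hB (w, 0) (0, φ) (0, ψ))
  rw [hs (0, ψ) (w, 0)] at this
  simp only [Prod.snd_add, LinearMap.add_apply, snd_inr_apply (hm _ _), snd_inl (hm _ _),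
    Prod.snd_zero, LinearMap.zero_apply] at this
  linear_combination -this

/-- A curvature tensor is determined by its mixed components. -/
theorem curv_apply (hR : R ∈ soDiagCurv b) (p q : W × Dual ℂ W) :
    R p q = R (p.1, 0) (0, q.2) + R (q.1, 0) (0, p.2) := by
  obtain ⟨w, φ⟩ := p
  obtain ⟨w', φ'⟩ := q
  have h1 : ((w, φ) : W × Dual ℂ W) = (w, 0) + (0, φ) := by simp
  have h2 : ((w', φ') : W × Dual ℂ W) = (w', 0) + (0, φ') := by simp
  rw [h1, h2]
  simp only [map_add, LinearMap.add_apply]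
  rw [curv_inl_inl hR, curv_inr_inr hR, hR.1 (0, φ) (w', 0), zero_add, add_zero, add_comm]
  simp

end Curv

/-! ### The alternating form of a curvature tensor -/

variable (e : W ≃ₗ[ℂ] Dual ℂ W)

/-- The 4-linear form `(α, φ, β, ψ) ↦ ψ (R(e⁻¹α, φ) e⁻¹β)` on `W*` attached to `R`, where
`e : W ≃ W*` is the isomorphism given by the form `b`. -/
noncomputable def curvQuad
    (R : (W × Dual ℂ W) →ₗ[ℂ] (W × Dual ℂ W) →ₗ[ℂ] Module.End ℂ (W × Dual ℂ W)) :
    Dual ℂ W →ₗ[ℂ] Dual ℂ W →ₗ[ℂ] Dual ℂ W →ₗ[ℂ] Dual ℂ W →ₗ[ℂ] ℂ :=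
  LinearMap.mk₂ ℂ (fun α φ => Dual.eval ℂ W ∘ₗ LinearMap.fst ℂ W (Dual ℂ W) ∘ₗ
      (R (LinearMap.inl ℂ W (Dual ℂ W) (e.symm α)) (LinearMap.inr ℂ W (Dual ℂ W) φ)) ∘ₗ
      LinearMap.inl ℂ W (Dual ℂ W) ∘ₗ e.symm.toLinearMap)
    (fun _ _ _ => by simp only [map_add, LinearMap.add_apply, LinearMap.add_comp,
      LinearMap.comp_add])
    (fun _ _ _ => by simp only [map_smul, LinearMap.smul_apply, LinearMap.smul_comp,
      LinearMap.comp_smul])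
    (fun _ _ _ => by simp only [map_add, LinearMap.add_comp, LinearMap.comp_add])
    (fun _ _ _ => by simp only [map_smul, LinearMap.smul_comp, LinearMap.comp_smul])

theorem curvQuad_apply
    (R : (W × Dual ℂ W) →ₗ[ℂ] (W × Dual ℂ W) →ₗ[ℂ] Module.End ℂ (W × Dual ℂ W))
    (α φ β ψ : Dual ℂ W) :
    curvQuad e R α φ β ψ = ψ (R (e.symm α, 0) (0, φ) (e.symm β, 0)).1 := rfl

/-- The linear map `R̄(g) → Λ⁴W`. -/
noncomputable def curvToAlt (he : ∀ x, e x = b x) (hsymm : ∀ x y : W, b x y = b y x) :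
    soDiagCurv b →ₗ[ℂ] (Dual ℂ W) [⋀^Fin 4]→ₗ[ℂ] ℂ where
  toFun R := altOfSkew (curvQuad e R.1)
    (fun α φ β ψ => by
      rw [curvQuad_apply, curvQuad_apply, curv_swap_inl R.2, map_neg])
    (fun α φ β ψ => by
      rw [curvQuad_apply, curvQuad_apply, curv_swap_inr R.2])
    (fun α φ β ψ => by
      have h := so_skew (R.2.2.1 (e.symm α, 0) (0, φ)) (e.symm β) (e.symm ψ)
      rw [hsymm, ← he, ← he, e.apply_symm_apply, e.apply_symm_apply] at h
      rw [curvQuad_apply, curvQuad_apply]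
      linear_combination h)
  map_add' R S := by
    ext v
    change v 3 _ = v 3 _ + v 3 _
    simp
  map_smul' c R := by
    ext v
    change v 3 _ = c • v 3 _
    simp

theorem curvToAlt_apply (he : ∀ x, e x = b x) (hsymm : ∀ x y : W, b x y = b y x)
    (R : soDiagCurv b) (v : Fin 4 → Dual ℂ W) :
    curvToAlt e he hsymm R v = v 3 (R.1 (e.symm (v 0), 0) (0, v 1) (e.symm (v 2), 0)).1 := rfl

theorem curvToAlt_injective (he : ∀ x, e x = b x) (hsymm : ∀ x y : W, b x y = b y x) :
    Function.Injective (curvToAlt e he hsymm) := by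
  rw [← LinearMap.ker_eq_bot, LinearMap.ker_eq_bot']
  intro R hR
  have h0 : ∀ (w : W) (φ : Dual ℂ W), R.1 (w, 0) (0, φ) = 0 := fun w φ => by
    refine eq_zero_of_inl (R.2.2.1 _ _) fun x => Prod.ext ?_ (snd_inl (R.2.2.1 _ _) x)
    refine (Module.forall_dual_apply_eq_zero_iff ℂ _).1 fun ψ => ?_
    have := DFunLike.congr_fun hR ![e w, φ, e x, ψ]
    rw [curvToAlt_apply] at this
    simpa using this
  apply Subtype.ext
  refine LinearMap.ext fun p => LinearMap.ext fun q => ?_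
  rw [curv_apply R.2, h0, h0, add_zero]
  rfl

/-! ### Bivectors and 4-vectors -/

/-- The rank-two skew endomorphism `x ↦ b(x, u) v - b(x, v) u`, i.e. the bivector `u ∧ v`
viewed in `so(W, b)`. -/
noncomputable def bivec (u v : W) : Module.End ℂ W :=
  (Dual.eval ℂ W u ∘ₗ e.toLinearMap).smulRight v - (Dual.eval ℂ W v ∘ₗ e.toLinearMap).smulRight u

theorem bivec_apply (u v x : W) : bivec e u v x = e x u • v - e x v • u := rfl

/-- The 4-vector `u₀ ∧ u₁ ∧ u₂ ∧ u₃` as a form on `W*`. -/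
noncomputable def detForm (u : Fin 4 → W) : (Dual ℂ W) [⋀^Fin 4]→ₗ[ℂ] ℂ :=
  Matrix.detRowAlternating.compLinearMap (LinearMap.pi fun i => Dual.eval ℂ W (u i))

theorem detForm_apply (u : Fin 4 → W) (v : Fin 4 → Dual ℂ W) :
    detForm u v = Matrix.det (Matrix.of fun i j => v i (u j)) := rfl

/-- Expansion of `A ∈ so(W, b)` in the bivectors of a basis. -/
theorem two_smul_eq_sum_bivec (he : ∀ x, e x = b x) (hsymm : ∀ x y : W, b x y = b y x)
    {ι : Type*} [Fintype ι] (B : Basis ι ℂ W) {A : Module.End ℂ W} (hA : A ∈ soSub b) :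
    (2 : ℂ) • A = ∑ k, ∑ l, B.coord l (A (e.symm (B.coord k))) • bivec e (B k) (B l) := by
  have hexp : ∀ x, A x = ∑ k, ∑ l, (B.coord l (A (e.symm (B.coord k))) * e x (B k)) • B l := by
    intro x
    have hx : x = ∑ k, e x (B k) • e.symm (B.coord k) := by
      apply e.injective
      simp only [map_sum, map_smul, e.apply_symm_apply]
      refine B.ext fun i => ?_
      classical
      simp
    conv_lhs => rw [hx, map_sum]
    refine Finset.sum_congr rfl fun k _ => ?_
    rw [map_smul, ← B.sum_repr (A (e.symm (B.coord k))), Finset.smul_sum]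
    refine Finset.sum_congr rfl fun l _ => ?_
    rw [smul_smul, mul_comm, B.sum_repr]
    rfl
  have hskew : ∀ k l, B.coord l (A (e.symm (B.coord k))) =
      -B.coord k (A (e.symm (B.coord l))) := by
    intro k l
    have h := hA (e.symm (B.coord k)) (e.symm (B.coord l))
    rw [hsymm, ← he, ← he, e.apply_symm_apply, e.apply_symm_apply] at h
    exact eq_neg_of_add_eq_zero_left h
  ext x
  have h2 : A x = -∑ k, ∑ l, (B.coord l (A (e.symm (B.coord k))) * e x (B l)) • B k := by
    conv_lhs => rw [hexp x, Finset.sum_comm]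
    rw [← Finset.sum_neg_distrib]
    refine Finset.sum_congr rfl fun k _ => ?_
    rw [← Finset.sum_neg_distrib]
    refine Finset.sum_congr rfl fun l _ => ?_
    rw [hskew l k, neg_mul, neg_smul]
  rw [LinearMap.smul_apply, two_smul]
  nth_rewrite 1 [hexp x]
  nth_rewrite 1 [h2]
  simp only [LinearMap.sum_apply, LinearMap.smul_apply, bivec_apply, smul_sub, smul_smul,
    Finset.sum_sub_distrib]
  rw [sub_eq_add_neg]

variable [FiniteDimensional ℂ W]

/-! ### The curvature tensor of an alternating form -/

/-- The endomorphisms `A(w, φ)` of `W` with `ψ (A(w, φ) x) = T(e w, φ, e x, ψ)`. -/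
noncomputable def altEnd (T : (Dual ℂ W) [⋀^Fin 4]→ₗ[ℂ] ℂ) :
    W →ₗ[ℂ] Dual ℂ W →ₗ[ℂ] Module.End ℂ W :=
  LinearMap.mk₂ ℂ (fun w φ => (Module.evalEquiv ℂ W).symm.toLinearMap ∘ₗ
      curryFour T (e w) φ ∘ₗ e.toLinearMap)
    (fun _ _ _ => by simp only [map_add, LinearMap.add_apply, LinearMap.add_comp,
      LinearMap.comp_add])
    (fun _ _ _ => by simp only [map_smul, LinearMap.smul_apply, LinearMap.smul_comp,
      LinearMap.comp_smul])
    (fun _ _ _ => by simp only [map_add, LinearMap.add_comp, LinearMap.comp_add])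
    (fun _ _ _ => by simp only [map_smul, LinearMap.smul_comp, LinearMap.comp_smul])

theorem dual_altEnd (T : (Dual ℂ W) [⋀^Fin 4]→ₗ[ℂ] ℂ) (w x : W) (φ ψ : Dual ℂ W) :
    ψ (altEnd e T w φ x) = curryFour T (e w) φ (e x) ψ :=
  Module.apply_evalEquiv_symm_apply ℂ W ψ _

/-- The curvature tensor `R((w, φ), (w', φ')) = A(w, φ') + A(w', φ)` attached to `T ∈ Λ⁴W`. -/
noncomputable def altToCurv (T : (Dual ℂ W) [⋀^Fin 4]→ₗ[ℂ] ℂ) :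
    (W × Dual ℂ W) →ₗ[ℂ] (W × Dual ℂ W) →ₗ[ℂ] Module.End ℂ (W × Dual ℂ W) :=
  LinearMap.mk₂ ℂ (fun p q => glDiagEmb (altEnd e T p.1 q.2 + altEnd e T q.1 p.2))
    (fun _ _ _ => by
      simp only [Prod.fst_add, Prod.snd_add, map_add, LinearMap.add_apply]; abel)
    (fun _ _ _ => by
      simp only [Prod.smul_fst, Prod.smul_snd, map_smul, LinearMap.smul_apply, map_add, smul_add])
    (fun _ _ _ => by
      simp only [Prod.fst_add, Prod.snd_add, map_add, LinearMap.add_apply]; abel)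
    (fun _ _ _ => by
      simp only [Prod.smul_fst, Prod.smul_snd, map_smul, LinearMap.smul_apply, map_add, smul_add])

theorem altToCurv_apply (T : (Dual ℂ W) [⋀^Fin 4]→ₗ[ℂ] ℂ) (p q : W × Dual ℂ W) :
    altToCurv e T p q = glDiagEmb (altEnd e T p.1 q.2 + altEnd e T q.1 p.2) := rfl

theorem altEnd_mem (he : ∀ x, e x = b x) (hsymm : ∀ x y : W, b x y = b y x)
    (T : (Dual ℂ W) [⋀^Fin 4]→ₗ[ℂ] ℂ) (w : W) (φ : Dual ℂ W) :
    altEnd e T w φ ∈ soSub b := by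
  intro x y
  rw [hsymm, ← he, ← he, dual_altEnd, dual_altEnd, curryFour_swap23, neg_add_cancel]

theorem altToCurv_mem (he : ∀ x, e x = b x) (hsymm : ∀ x y : W, b x y = b y x)
    (T : (Dual ℂ W) [⋀^Fin 4]→ₗ[ℂ] ℂ) : altToCurv e T ∈ soDiagCurv b := by
  refine ⟨fun p q => ?_, fun p q => ?_, fun p q r => Prod.ext ?_ ?_⟩
  · rw [altToCurv_apply, altToCurv_apply, add_comm]
  · exact ⟨_, add_mem (altEnd_mem e he hsymm T _ _) (altEnd_mem e he hsymm T _ _), rfl⟩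
  · have hsw : ∀ w φ x, altEnd e T w φ x = -altEnd e T x φ w := fun w φ x => by
      rw [← sub_eq_zero]
      refine (Module.forall_dual_apply_eq_zero_iff ℂ _).1 fun ψ => ?_
      rw [map_sub, map_neg, dual_altEnd, dual_altEnd, curryFour_swap02, sub_self]
    simp only [altToCurv_apply, glDiagEmb_apply, Prod.fst_add, LinearMap.add_apply, Prod.fst_zero]
    rw [hsw p.1 q.2, hsw q.1 p.2, hsw p.1 r.2 q.1]
    abel
  · have hsw : ∀ (w : W) (φ : Dual ℂ W) (x : W) (ψ : Dual ℂ W), ψ (altEnd e T w φ x) = -φ (altEnd e T w ψ x) := fun w φ x ψ => by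
      rw [dual_altEnd, dual_altEnd, curryFour_swap13]
    ext x
    simp only [altToCurv_apply, glDiagEmb_apply, Prod.snd_add, LinearMap.add_apply,
      Prod.snd_zero, LinearMap.neg_apply, LinearMap.comp_apply, map_add, LinearMap.zero_apply]
    rw [hsw p.1 q.2 x r.2, hsw q.1 p.2 x r.2, hsw r.1 q.2 x p.2]
    ring

theorem curvToAlt_altToCurv (he : ∀ x, e x = b x) (hsymm : ∀ x y : W, b x y = b y x)
    (T : (Dual ℂ W) [⋀^Fin 4]→ₗ[ℂ] ℂ) :
    curvToAlt e he hsymm ⟨altToCurv e T, altToCurv_mem e he hsymm T⟩ = T := by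
  ext v
  rw [curvToAlt_apply]
  simp only [altToCurv_apply, glDiagEmb_apply, map_zero, add_zero]
  rw [dual_altEnd, e.apply_symm_apply, e.apply_symm_apply, curryFour_apply]
  congr 1
  ext i
  fin_cases i <;> rfl

/-- The isomorphism `R̄(g) ≃ Λ⁴W`. -/
noncomputable def curvEquiv (he : ∀ x, e x = b x) (hsymm : ∀ x y : W, b x y = b y x) :
    soDiagCurv b ≃ₗ[ℂ] (Dual ℂ W) [⋀^Fin 4]→ₗ[ℂ] ℂ :=
  LinearEquiv.ofBijective (curvToAlt e he hsymm)
    ⟨curvToAlt_injective e he hsymm, fun T => ⟨_, curvToAlt_altToCurv e he hsymm T⟩⟩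

/-! ### Dimension and the skew-Berger property -/

theorem finrank_alternating_dual :
    finrank ℂ ((Dual ℂ W) [⋀^Fin 4]→ₗ[ℂ] ℂ) = (finrank ℂ W).choose 4 := by
  rw [(exteriorPower.alternatingMapLinearEquiv (R := ℂ) (M := Dual ℂ W) (N := ℂ)
    (n := 4)).finrank_eq]
  change finrank ℂ (Dual ℂ _) = _
  rw [Subspace.dual_finrank_eq, exteriorPower.finrank_eq, Subspace.dual_finrank_eq]

/-- If `f₀, f₁` are dual to `u₀, u₁` and vanish on `u₂, u₃`, contracting
`u₀ ∧ u₁ ∧ u₂ ∧ u₃` with them leaves `u₂ ∧ u₃`. -/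
theorem altEnd_detForm (u : Fin 4 → W) (f₀ f₁ : Dual ℂ W)
    (h0 : f₀ (u 0) = 1 ∧ f₀ (u 1) = 0 ∧ f₀ (u 2) = 0 ∧ f₀ (u 3) = 0)
    (h1 : f₁ (u 0) = 0 ∧ f₁ (u 1) = 1 ∧ f₁ (u 2) = 0 ∧ f₁ (u 3) = 0) :
    altEnd e (detForm u) (e.symm f₀) f₁ = bivec e (u 2) (u 3) := by
  obtain ⟨h00, h01, h02, h03⟩ := h0
  obtain ⟨h10, h11, h12, h13⟩ := h1
  ext x
  rw [← sub_eq_zero]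
  refine (Module.forall_dual_apply_eq_zero_iff ℂ _).1 fun ψ => ?_
  rw [map_sub, dual_altEnd, curryFour_apply, detForm_apply, bivec_apply, e.apply_symm_apply]
  simp [Matrix.det_succ_row_zero, Fin.sum_univ_succ, Fin.succAbove, h00, h01, h02, h03, h10, h11,
    h12, h13]

theorem soDiag_le_span (he : ∀ x, e x = b x) (hsymm : ∀ x y : W, b x y = b y x)
    (h4 : 4 ≤ finrank ℂ W) :
    soDiag b ≤ Submodule.span ℂ {C : Module.End ℂ (W × Module.Dual ℂ W) |
      ∃ R ∈ soDiagCurv b, ∃ v w : W × Module.Dual ℂ W, R v w = C} := by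
  rintro _ ⟨A, hA, rfl⟩
  have hsum := two_smul_eq_sum_bivec e he hsymm (finBasis ℂ W) hA
  have hA2 : A = (2⁻¹ : ℂ) • ((2 : ℂ) • A) := by
    rw [smul_smul, inv_mul_cancel₀ two_ne_zero, one_smul]
  rw [hA2, hsum, map_smul]
  refine Submodule.smul_mem _ _ ?_
  rw [map_sum]
  refine Submodule.sum_mem _ fun k _ => ?_
  rw [map_sum]
  refine Submodule.sum_mem _ fun l _ => ?_
  rw [map_smul]
  refine Submodule.smul_mem _ _ ?_
  by_cases hkl : k = l
  · have : bivec e (finBasis ℂ W k) (finBasis ℂ W l) = 0 := by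
      ext x
      rw [hkl, bivec_apply, sub_self, LinearMap.zero_apply]
    rw [this, map_zero]
    exact Submodule.zero_mem _
  -- since `dim W ≥ 4` there are two further basis vectors besides the `k`-th and the `l`-th
  obtain ⟨i, hi⟩ : ∃ i, i ∉ ({k, l} : Finset (Fin (finrank ℂ W))) := by
    by_contra! h
    have h1 := Finset.card_le_card (fun x _ => h x : Finset.univ ⊆ _)
    have h2 := Finset.card_le_two (a := k) (b := l)
    rw [Finset.card_univ, Fintype.card_fin] at h1
    lia
  obtain ⟨j, hj⟩ : ∃ j, j ∉ ({i, k, l} : Finset (Fin (finrank ℂ W))) := by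
    by_contra! h
    have h1 := Finset.card_le_card (fun x _ => h x : Finset.univ ⊆ _)
    have h2 := Finset.card_le_three (a := i) (b := k) (c := l)
    rw [Finset.card_univ, Fintype.card_fin] at h1
    lia
  simp only [Finset.mem_insert, Finset.mem_singleton, not_or] at hi hj
  refine Submodule.subset_span ⟨_, altToCurv_mem e he hsymm (detForm
    ![finBasis ℂ W i, finBasis ℂ W j, finBasis ℂ W k, finBasis ℂ W l]),
    (e.symm ((finBasis ℂ W).coord i), 0), (0, (finBasis ℂ W).coord j), ?_⟩
  rw [altToCurv_apply]
  simp only [map_zero, add_zero]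
  rw [altEnd_detForm]
  · rfl
  · simp [hi.1, hi.2, hj.1]
  · simp [Ne.symm hj.1, hj.2.1, hj.2.2]

end SkewBerger

/-- for `g = so(2n,ℂ)` acting diagonally on `V = W ⊕ W*`
(`W = ℂ²ⁿ` with a nondegenerate symmetric bilinear form `b`, `n ≥ 2`; `g` lies
in `sp(V,ω)` for the canonical symplectic form `ω((x,φ),(y,ψ)) = φ(y) − ψ(x)`),
the space `R̄(g)` is linearly isomorphic to `Λ⁴W`, the space of alternating
4-linear forms on `W*`; in particular `dim_ℂ R̄(g) = C(2n,4)`, and `g` is a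
skew-Berger subalgebra of `sp(V,ω)`. -/
theorem stmt16 (n : ℕ) (hn : 2 ≤ n) [FiniteDimensional ℂ W]
    (hdim : Module.finrank ℂ W = 2 * n)
    (hsymm : ∀ x y : W, b x y = b y x)
    (hnd : ∀ x : W, (∀ y : W, b x y = 0) → x = 0) :
    (∀ B ∈ soDiag b, ∀ p q : W × Module.Dual ℂ W,
      ((B p).2 q.1 - q.2 (B p).1) + (p.2 (B q).1 - (B q).2 p.1) = 0) ∧
    Nonempty (soDiagCurv b ≃ₗ[ℂ] AlternatingMap ℂ (Module.Dual ℂ W) ℂ (Fin 4)) ∧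
    Module.finrank ℂ ↥(soDiagCurv b) = Nat.choose (2 * n) 4 ∧
    soDiag b = Submodule.span ℂ {C : Module.End ℂ (W × Module.Dual ℂ W) |
      ∃ R ∈ soDiagCurv b, ∃ v w : W × Module.Dual ℂ W, R v w = C} := by
  have hinj : Function.Injective b := by
    rw [← LinearMap.ker_eq_bot, LinearMap.ker_eq_bot']
    exact fun x hx => hnd x fun y => by rw [hx, LinearMap.zero_apply]
  obtain ⟨e, he⟩ : ∃ e : W ≃ₗ[ℂ] Dual ℂ W, ∀ x, e x = b x :=
    ⟨LinearEquiv.ofInjectiveOfFinrankEq b hinj Subspace.dual_finrank_eq.symm, fun x => rfl⟩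
  refine ⟨fun B hB => soDiag_le_sp b B hB, ⟨curvEquiv e he hsymm⟩, ?_, ?_⟩
  · rw [(curvEquiv e he hsymm).finrank_eq, finrank_alternating_dual, hdim]
  · refine le_antisymm (soDiag_le_span e he hsymm (by lia)) (Submodule.span_le.2 ?_)
    rintro _ ⟨R, hR, v, w, rfl⟩
    exact hR.2.1 v w
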